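/- Let R = {1,…,11}, C = {12,…,22}, S = {23,…,33}, and let γ₁ = (1 2)(3 4)(5 6)(12 13)(14 15)(16 17)(23 24)(25 26)(27 28) and γ₄ = (1 2)(8 10)(9 11)(16 17)(19 22)(20 21)(27 28)(29 33)(30 32) be permutations of R∪C∪S. There is no Latin square of order 11 in triple system representation on point classes R, C, S that admits both γ₁ and γ₄ as autoparatopisms. -/

import Mathlib

/-!
If an autoparatopism fixes two points of a triple from different classes, it fixes the triple, hence
permutes its points (`smul_mem_of_fixed`). Consider row 7 (moved by `g4`, fixed by `g1`) and the
columns 11, 12, 13 (moved by `g1`, fixed by `g4`). The symbol `s` in such a cell is not fixed by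
`g1`, since otherwise the column would be fixed too, and it is not fixed by `g4`, since otherwise
the row would be. The only symbols moved by both are 26 and 27 (`symbol_of_cell`), so one of them
occurs in row 7 in two of the three columns, a contradiction.
-/

open Pointwise

/-- The 33 points, numbered 0,…,32 (point k of the paper corresponds to k − 1). -/
abbrev P33 : Type := Fin 33

/-- The row class R = {1,…,11} of the paper, i.e. values 0,…,10. -/
def R33 : Set P33 := {x | x.val < 11}

/-- The column class C = {12,…,22} of the paper, i.e. values 11,…,21. -/
def C33 : Set P33 := {x | 11 ≤ x.val ∧ x.val < 22}

/-- The symbol class S = {23,…,33} of the paper, i.e. values 22,…,32. -/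
def S33 : Set P33 := {x | 22 ≤ x.val}

/-- A Latin square of order 11 in triple system representation on R, C, S. -/
def IsLatin (L : Set (Set P33)) : Prop :=
  (∀ t ∈ L, ∃ r ∈ R33, ∃ c ∈ C33, ∃ s ∈ S33, t = {r, c, s}) ∧
  (∀ x y : P33,
    ((x ∈ R33 ∧ y ∈ C33) ∨ (x ∈ R33 ∧ y ∈ S33) ∨ (x ∈ C33 ∧ y ∈ S33)) →
    ∃! t, t ∈ L ∧ x ∈ t ∧ y ∈ t)

/-- γ₁ = (1 2)(3 4)(5 6)(12 13)(14 15)(16 17)(23 24)(25 26)(27 28). -/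
def g1 : Equiv.Perm P33 :=
  Equiv.swap 0 1 * Equiv.swap 2 3 * Equiv.swap 4 5 *
  Equiv.swap 11 12 * Equiv.swap 13 14 * Equiv.swap 15 16 *
  Equiv.swap 22 23 * Equiv.swap 24 25 * Equiv.swap 26 27

/-- γ₄ = (1 2)(8 10)(9 11)(16 17)(19 22)(20 21)(27 28)(29 33)(30 32). -/
def g4 : Equiv.Perm P33 :=
  Equiv.swap 0 1 * Equiv.swap 7 9 * Equiv.swap 8 10 *
  Equiv.swap 15 16 * Equiv.swap 18 21 * Equiv.swap 19 20 *
  Equiv.swap 26 27 * Equiv.swap 28 32 * Equiv.swap 29 31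

/-- An autoparatopism fixing two points of a triple in different classes preserves that triple. -/
lemma smul_mem_of_fixed {L : Set (Set P33)} (hL : IsLatin L) {g : Equiv.Perm P33}
    (hg : g • L = L) {t : Set P33} (ht : t ∈ L) {x y z : P33}
    (hxy : (x ∈ R33 ∧ y ∈ C33) ∨ (x ∈ R33 ∧ y ∈ S33) ∨ (x ∈ C33 ∧ y ∈ S33))
    (hx : x ∈ t) (hy : y ∈ t) (hz : z ∈ t) (gx : g x = x) (gy : g y = y) : g z ∈ t := by
  have hgt : g • t ∈ L := by
    rw [← hg]
    exact Set.smul_mem_smul_set ht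
  have mem_smul : ∀ w ∈ t, g w ∈ g • t := fun w hw => Set.smul_mem_smul_set hw
  have heq : g • t = t := (hL.2 x y hxy).unique
    ⟨hgt, by simpa only [gx] using mem_smul x hx, by simpa only [gy] using mem_smul y hy⟩
    ⟨ht, hx, hy⟩
  simpa only [heq] using mem_smul z hz

/-- In row 7, the symbols in columns 11, 12, 13 are moved by both `g1` and `g4`, so they are 26
or 27. -/
lemma symbol_of_cell {L : Set (Set P33)} (hL : IsLatin L) (h1 : g1 • L = L) (h4 : g4 • L = L)
    (c : P33) (hc : c = 11 ∨ c = 12 ∨ c = 13) :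
    ({7, c, 26} : Set P33) ∈ L ∨ ({7, c, 27} : Set P33) ∈ L := by
  have h7 : (7 : P33) ∈ R33 := by simp [R33]
  have hcC : c ∈ C33 := by rcases hc with rfl | rfl | rfl <;> simp [C33]
  obtain ⟨t, ⟨ht, h7t, hct⟩, -⟩ := hL.2 7 c (Or.inl ⟨h7, hcC⟩)
  obtain ⟨r, hr, c', hc', s, hs, rfl⟩ := hL.1 t ht
  simp only [R33, C33, S33, Set.mem_ofPred_eq] at hr hc' hs h7 hcC
  obtain rfl : r = 7 := by
    simp only [Set.mem_insert_iff, Set.mem_singleton_iff] at h7t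
    grind
  obtain rfl : c' = c := by
    simp only [Set.mem_insert_iff, Set.mem_singleton_iff] at hct
    grind
  have hs1 : g1 s ≠ s := by
    intro gs
    have h := smul_mem_of_fixed hL h1 ht (x := 7) (y := s) (z := c')
      (Or.inr (Or.inl ⟨h7, hs⟩)) (by simp) (by simp) (by simp) (by decide) gs
    simp only [Set.mem_insert_iff, Set.mem_singleton_iff] at h
    have hgc : (g1 c').val < 22 ∧ g1 c' ≠ 7 ∧ g1 c' ≠ c' := by
      rcases hc with rfl | rfl | rfl <;> decide
    grind
  have hs4 : g4 s ≠ s := by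
    intro gs
    have h := smul_mem_of_fixed hL h4 ht (x := c') (y := s) (z := 7)
      (Or.inr (Or.inr ⟨hcC, hs⟩)) (by simp) (by simp) (by simp)
      (by rcases hc with rfl | rfl | rfl <;> decide) gs
    simp only [Set.mem_insert_iff, Set.mem_singleton_iff] at h
    have hg7 : g4 7 = 9 := by decide
    grind
  have key : ∀ s : P33, 22 ≤ s.val → g1 s ≠ s → g4 s ≠ s → s = 26 ∨ s = 27 := by decide
  rcases key s hs hs1 hs4 with rfl | rfl
  · exact Or.inl ht
  · exact Or.inr ht

/-- A symbol occurs at most once in row 7. -/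
lemma column_unique {L : Set (Set P33)} (hL : IsLatin L) {c d s : P33} (hc : c ∈ C33)
    (hs : s ∈ S33) (h : ({7, c, s} : Set P33) ∈ L) (h' : ({7, d, s} : Set P33) ∈ L) : c = d := by
  have heq := (hL.2 7 s (Or.inr (Or.inl ⟨by simp [R33], hs⟩))).unique
    ⟨h, by simp, by simp⟩ ⟨h', by simp, by simp⟩
  have hmem : c ∈ ({7, d, s} : Set P33) := heq ▸ (by simp : c ∈ ({7, c, s} : Set P33))
  simp only [Set.mem_insert_iff, Set.mem_singleton_iff] at hmem
  simp only [C33, S33, Set.mem_ofPred_eq] at hc hs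
  grind

/-- No Latin square of order 11 admits both γ₁ and γ₄ as autoparatopisms. -/
theorem no_latin_square_admits_g1_g4 :
    ¬ ∃ L : Set (Set P33), IsLatin L ∧ g1 • L = L ∧ g4 • L = L := by
  rintro ⟨L, hL, h1, h4⟩
  have c11 : (11 : P33) ∈ C33 := by simp [C33]
  have c12 : (12 : P33) ∈ C33 := by simp [C33]
  have s26 : (26 : P33) ∈ S33 := by simp [S33]
  have s27 : (27 : P33) ∈ S33 := by simp [S33]
  -- Two of the three columns carry the same symbol.
  rcases symbol_of_cell hL h1 h4 11 (by simp) with a | a <;>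
  rcases symbol_of_cell hL h1 h4 12 (by simp) with b | b <;>
  rcases symbol_of_cell hL h1 h4 13 (by simp) with c | c <;>
  first
  | exact absurd (column_unique hL c11 s26 a b) (by decide)
  | exact absurd (column_unique hL c11 s27 a b) (by decide)
  | exact absurd (column_unique hL c11 s26 a c) (by decide)
  | exact absurd (column_unique hL c11 s27 a c) (by decide)
  | exact absurd (column_unique hL c12 s26 b c) (by decide)
  | exact absurd (column_unique hL c12 s27 b c) (by decide)
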